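/- Let t ≥ 2 and let a_1 > a_2 > ⋯ > a_t be positive integers such that the numbers 2^{a_1}+1, …, 2^{a_t}+1 are pairwise coprime. Then lcm(a_2, …, a_t) < 2^{a_1}. -/

import Mathlib

/-!
If `v` is the 2-adic valuation of `x`, then `b ^ 2 ^ v + 1` divides `b ^ x + 1`. So for `0 < b`,
exponents `x` whose values `b ^ x + 1` are pairwise coprime have distinct 2-adic valuations. Among
them at most one is odd, and halving the even ones gives numbers of the same kind with half the
upper bound. Hence the maximal lcm `F n` of positive integers at most `n` with distinct valuations
satisfies `F n ≤ 2 * m * F (n / 2)` for `2 ≤ n`, where `m` is the largest odd number up to `n`.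
Since `2 * n ≤ 2 ^ (n - n / 2)` for `7 ≤ n`, this recursion keeps `F n` below `2 ^ n` once the
values `1 ≤ n < 7` have been computed.
-/

theorem pow_two_pow_padicValNat_add_one_dvd (b : ℕ) {x : ℕ} (hx : x ≠ 0) :
    b ^ 2 ^ padicValNat 2 x + 1 ∣ b ^ x + 1 := by
  obtain ⟨e, u, hu, rfl⟩ := Nat.exists_eq_two_pow_mul_odd hx
  have hval : padicValNat 2 (2 ^ e * u) = e := by
    rw [padicValNat_base_pow_mul one_lt_two (by rintro rfl; simp at hx),
      padicValNat.eq_zero_of_not_dvd hu.not_two_dvd_nat, zero_add]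
  rw [hval, pow_mul]
  simpa only [one_pow] using hu.nat_add_dvd_pow_add_pow (b ^ 2 ^ e) 1

theorem padicValNat_two_ne_of_coprime_pow_add_one {b x y : ℕ} (hb : 0 < b) (hx : x ≠ 0)
    (hy : y ≠ 0) (hcop : Nat.Coprime (b ^ x + 1) (b ^ y + 1)) :
    padicValNat 2 x ≠ padicValNat 2 y := by
  intro hval
  have hdvd_y := pow_two_pow_padicValNat_add_one_dvd b hy
  rw [← hval] at hdvd_y
  have hone := Nat.eq_one_of_dvd_coprimes hcop (pow_two_pow_padicValNat_add_one_dvd b hx) hdvd_y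
  have hpos : 0 < b ^ 2 ^ padicValNat 2 x := by positivity
  omega

/-- An upper bound for the lcm of positive integers at most `n` with distinct 2-adic valuations.
In the recursive case, `2 * ((n - 1) / 2) + 1` is the largest odd number up to `n`. -/
def lcmBound (n : ℕ) : ℕ :=
  if n < 2 then 1 else (2 * ((n - 1) / 2) + 1) * (2 * lcmBound (n / 2))

section LcmOfDistinctValuations

variable {ι : Type*} {s : Finset ι} {a : ι → ℕ} {n : ℕ}

theorem lcm_dvd_lcm_odd_mul_two_mul_lcm_even_half (s : Finset ι) (a : ι → ℕ) :
    s.lcm a ∣ {i ∈ s | Odd (a i)}.lcm a * (2 * {i ∈ s | Even (a i)}.lcm (fun i => a i / 2)) := by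
  refine Finset.lcm_dvd fun i hi => ?_
  rcases Nat.even_or_odd (a i) with heven | hodd
  · refine Dvd.dvd.mul_left ?_ _
    rw [← Nat.two_mul_div_two_of_even heven]
    exact mul_dvd_mul_left 2
      (Finset.dvd_lcm (f := fun i => a i / 2) (Finset.mem_filter.mpr ⟨hi, heven⟩))
  · exact (Finset.dvd_lcm (Finset.mem_filter.mpr ⟨hi, hodd⟩)).mul_right _

theorem lcm_filter_odd_le (hle : ∀ i ∈ s, a i ≤ n)
    (hinj : Set.InjOn (fun i => padicValNat 2 (a i)) s) :
    {i ∈ s | Odd (a i)}.lcm a ≤ 2 * ((n - 1) / 2) + 1 := by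
  rcases ({i ∈ s | Odd (a i)} : Finset ι).eq_empty_or_nonempty with hempty | ⟨i, hi⟩
  · rw [hempty, Finset.lcm_empty]
    exact Nat.le_add_left 1 _
  · obtain ⟨his, hi_odd⟩ := Finset.mem_filter.mp hi
    have hdvd : {i ∈ s | Odd (a i)}.lcm a ∣ a i := by
      refine Finset.lcm_dvd fun j hj => ?_
      obtain ⟨hjs, hj_odd⟩ := Finset.mem_filter.mp hj
      have hji : j = i := hinj hjs his <| by
        simp only [padicValNat.eq_zero_of_not_dvd hi_odd.not_two_dvd_nat,
          padicValNat.eq_zero_of_not_dvd hj_odd.not_two_dvd_nat]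
      rw [hji]
    have hi_le_largest_odd : a i ≤ 2 * ((n - 1) / 2) + 1 := by
      have hi_le := hle i his
      obtain ⟨k, hk⟩ := hi_odd
      omega
    exact (Nat.le_of_dvd hi_odd.pos hdvd).trans hi_le_largest_odd

theorem injOn_padicValNat_even_half (hpos : ∀ i ∈ s, 0 < a i)
    (hinj : Set.InjOn (fun i => padicValNat 2 (a i)) s) :
    Set.InjOn (fun i => padicValNat 2 (a i / 2)) ({i ∈ s | Even (a i)} : Finset ι) := by
  have hval : ∀ i ∈ s, Even (a i) → padicValNat 2 (a i) = padicValNat 2 (a i / 2) + 1 := by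
    intro i hi heven
    have hone_le := one_le_padicValNat_of_dvd (hpos i hi).ne' heven.two_dvd
    rw [padicValNat.div heven.two_dvd]
    omega
  intro i hi j hj hij
  obtain ⟨hi, hi_even⟩ := Finset.mem_filter.mp hi
  obtain ⟨hj, hj_even⟩ := Finset.mem_filter.mp hj
  apply hinj hi hj
  simp only [hval i hi hi_even, hval j hj hj_even, hij]

theorem lcm_le_lcmBound (hpos : ∀ i ∈ s, 0 < a i) (hle : ∀ i ∈ s, a i ≤ n)
    (hinj : Set.InjOn (fun i => padicValNat 2 (a i)) s) : s.lcm a ≤ lcmBound n := by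
  induction n using Nat.strong_induction_on generalizing s a with
  | _ n ih =>
    rw [lcmBound]
    split_ifs with hn
    · refine Nat.le_of_dvd one_pos (Finset.lcm_dvd fun i hi => ?_)
      have hi_pos := hpos i hi
      have hi_le := hle i hi
      exact dvd_of_eq (by omega)
    · have hhalf_pos : ∀ i ∈ ({i ∈ s | Even (a i)} : Finset ι), 0 < a i / 2 := by
        intro i hi
        obtain ⟨hi, heven⟩ := Finset.mem_filter.mp hi
        exact Nat.div_pos (Nat.le_of_dvd (hpos i hi) heven.two_dvd) two_pos
      have hhalf_le : ∀ i ∈ ({i ∈ s | Even (a i)} : Finset ι), a i / 2 ≤ n / 2 :=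
        fun i hi => Nat.div_le_div_right (hle i (Finset.mem_filter.mp hi).1)
      have hhalf := ih (n / 2) (by omega) hhalf_pos hhalf_le
        (injOn_padicValNat_even_half hpos hinj)
      have hodd_lcm_pos : 0 < {i ∈ s | Odd (a i)}.lcm a :=
        Nat.pos_of_ne_zero <| Finset.lcm_ne_zero_iff.mpr fun i hi =>
          (hpos i (Finset.mem_filter.mp hi).1).ne'
      have hhalf_lcm_pos : 0 < {i ∈ s | Even (a i)}.lcm (fun i => a i / 2) :=
        Nat.pos_of_ne_zero <| Finset.lcm_ne_zero_iff.mpr fun i hi => (hhalf_pos i hi).ne'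
      calc s.lcm a
          ≤ {i ∈ s | Odd (a i)}.lcm a * (2 * {i ∈ s | Even (a i)}.lcm (fun i => a i / 2)) :=
            Nat.le_of_dvd (by positivity) (lcm_dvd_lcm_odd_mul_two_mul_lcm_even_half s a)
        _ ≤ (2 * ((n - 1) / 2) + 1) * (2 * lcmBound (n / 2)) :=
            Nat.mul_le_mul (lcm_filter_odd_le hle hinj) (Nat.mul_le_mul_left 2 hhalf)

end LcmOfDistinctValuations

theorem four_mul_le_two_pow {k : ℕ} (hk : 4 ≤ k) : 4 * k ≤ 2 ^ k := by
  induction k, hk using Nat.le_induction with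
  | base => norm_num
  | succ k hk ih => rw [pow_succ]; omega

theorem lcmBound_lt_two_pow {n : ℕ} (hn : n ≠ 0) : lcmBound n < 2 ^ n := by
  induction n using Nat.strong_induction_on with
  | _ n ih =>
    by_cases hsmall : n < 7
    · interval_cases n <;> simp [lcmBound] at hn ⊢
    · have hexp := four_mul_le_two_pow (k := n - n / 2) (by omega)
      rw [lcmBound, if_neg (by omega)]
      calc (2 * ((n - 1) / 2) + 1) * (2 * lcmBound (n / 2))
          = 2 * (2 * ((n - 1) / 2) + 1) * lcmBound (n / 2) := by ring
        _ < 2 * (2 * ((n - 1) / 2) + 1) * 2 ^ (n / 2) := by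
          gcongr
          exact ih (n / 2) (by omega) (by omega)
        _ ≤ 2 ^ (n - n / 2) * 2 ^ (n / 2) := by
          gcongr
          omega
        _ = 2 ^ n := pow_sub_mul_pow 2 (Nat.div_le_self n 2)

theorem stmt_14_general {ι : Type*} {s : Finset ι} {a : ι → ℕ} {b n : ℕ} (hb : 0 < b)
    (hn : n ≠ 0) (hpos : ∀ i ∈ s, 0 < a i) (hle : ∀ i ∈ s, a i ≤ n)
    (hcop : (s : Set ι).Pairwise fun i j => Nat.Coprime (b ^ a i + 1) (b ^ a j + 1)) :
    s.lcm a < 2 ^ n := by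
  have hinj : Set.InjOn (fun i => padicValNat 2 (a i)) s := by
    intro i hi j hj hval
    by_contra hij
    exact padicValNat_two_ne_of_coprime_pow_add_one hb (hpos i hi).ne' (hpos j hj).ne'
      (hcop hi hj hij) hval
  exact (lcm_le_lcmBound hpos hle hinj).trans_lt (lcmBound_lt_two_pow hn)

/-- For `t ≥ 2` and positive integers `a₁ > a₂ > ⋯ > a_t` with `2^{a_j}+1` pairwise coprime,
`lcm(a₂, …, a_t) < 2^{a₁}`. -/
theorem stmt_14 (t : ℕ) (ht : 2 ≤ t)
    (a : Fin t → ℕ) (hpos : ∀ j, 0 < a j) (hanti : StrictAnti a)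
    (hcop : ∀ j k, j ≠ k → Nat.Coprime (2 ^ a j + 1) (2 ^ a k + 1)) :
    (Finset.univ.filter (fun j : Fin t => j ≠ ⟨0, by omega⟩)).lcm a <
      2 ^ a ⟨0, by omega⟩ :=
  stmt_14_general two_pos (hpos _).ne' (fun j _ => hpos j)
    (fun j _ => hanti.antitone (Fin.mk_le_of_le_val j.val.zero_le)) fun j _ k _ => hcop j k
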